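/- Let A, B be symmetric n×n real matrices satisfying A_{ij}B_{ij} + A_{kl}B_{kl} ≤ 2·min{A_{ij}B_{kl}, A_{kl}B_{ij}} for all i,j,k,l ∈ [n]. Then (I, vec(I)vec(I)ᵀ) is an optimal solution to the SDP relaxation: it is feasible and every feasible pair (X, 𝐗) satisfies ⟨A⊗B, 𝐗⟩ ≥ Σ_{i,j} A_{ij}B_{ij}. -/

import Mathlib

open Matrix BigOperators

noncomputable section

/-- `vec(X)` indexed by pairs `(i,k)` with `vec(X)_(i,k) = X i k`. -/
def vecM {n : ℕ} (X : Matrix (Fin n) (Fin n) ℝ) : Fin n × Fin n → ℝ :=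
  fun p => X p.1 p.2

/-- Kronecker product indexed so that `(A ⊗ B) (i,k) (j,l) = A i j * B k l`. -/
def kron {n : ℕ} (A B : Matrix (Fin n) (Fin n) ℝ) :
    Matrix (Fin n × Fin n) (Fin n × Fin n) ℝ :=
  Matrix.of fun p q => A p.1 q.1 * B p.2 q.2

/-- The all-ones `n × n` matrix. -/
def Eall (n : ℕ) : Matrix (Fin n) (Fin n) ℝ :=
  Matrix.of fun _ _ => (1 : ℝ)

/-- `X` is doubly stochastic. -/
def DS {n : ℕ} (X : Matrix (Fin n) (Fin n) ℝ) : Prop :=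
  (∀ i, ∑ j, X i j = 1) ∧ (∀ j, ∑ i, X i j = 1) ∧ (∀ i j, 0 ≤ X i j)

/-- Feasibility of the pair `(X, Y)` for the SDP relaxation of the QAP. -/
def SDPFeasible {n : ℕ} (X : Matrix (Fin n) (Fin n) ℝ)
    (Y : Matrix (Fin n × Fin n) (Fin n × Fin n) ℝ) : Prop :=
  (Y - vecMulVec (vecM X) (vecM X)).PosSemidef ∧
  (∀ k l, ∑ i, ∑ j, Y (i, k) (j, l) = 1) ∧
  (∀ k l, ∑ i, ∑ j, Y (k, i) (l, j) = 1) ∧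
  (∀ k i j, i ≠ j → Y (i, k) (j, k) = 0) ∧
  (∀ k i j, i ≠ j → Y (k, i) (k, j) = 0) ∧
  (∀ p q, 0 ≤ Y p q) ∧
  DS X

/-- The SDP objective `⟨A ⊗ B, Y⟩`. -/
def sdpObj {n : ℕ} (A B : Matrix (Fin n) (Fin n) ℝ)
    (Y : Matrix (Fin n × Fin n) (Fin n × Fin n) ℝ) : ℝ :=
  ∑ p, ∑ q, kron A B p q * Y p q

/-- The set `𝒮`: closure of matrices `Y` such that `G⊗E + E⊗H + Y` is PSD for some `G, H`. -/
def Scone (n : ℕ) : Set (Matrix (Fin n × Fin n) (Fin n × Fin n) ℝ) :=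
  closure {Y | ∃ G H : Matrix (Fin n) (Fin n) ℝ,
    (kron G (Eall n) + kron (Eall n) H + Y).PosSemidef}

/-- The set `𝒯`. -/
def Tcone (n : ℕ) : Set (Matrix (Fin n × Fin n) (Fin n × Fin n) ℝ) :=
  {Y | ∀ X : Matrix (Fin n) (Fin n) ℝ, DS X →
    ∑ p, ∑ q, vecM X p * Y p q * vecM X q ≥
      ∑ p, ∑ q, vecM (1 : Matrix (Fin n) (Fin n) ℝ) p * Y p q *
        vecM (1 : Matrix (Fin n) (Fin n) ℝ) q}

/-!
Regrouping the index `((i, k), (j, l))` as `((i, j), (k, l))` turns `Y` into a coupling of the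
counting measure on pairs `(i, j)` with itself, and `⟨A ⊗ B, Y⟩` into the transport cost of this
coupling for the cost `A i j * B k l`. The condition on `A` and `B` says that half the Hadamard
product of `A` and `B`, used on both factors, is a pair of Kantorovich potentials for this cost,
so weak duality bounds every transport cost below by `∑ i, ∑ j, A i j * B i j`.
-/

section Coupling

variable {α β R : Type*} [Fintype α] [Fintype β]

theorem sum_potential_mul_marginal_le [Semiring R] [PartialOrder R] [IsOrderedRing R]
    {c π : α → β → R} {φ : α → R} {ψ : β → R}
    (hc : ∀ a b, φ a + ψ b ≤ c a b) (hπ : ∀ a b, 0 ≤ π a b) :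
    ∑ a, φ a * ∑ b, π a b + ∑ b, ψ b * ∑ a, π a b ≤ ∑ a, ∑ b, c a b * π a b :=
  calc ∑ a, φ a * ∑ b, π a b + ∑ b, ψ b * ∑ a, π a b
      = ∑ a, ∑ b, (φ a + ψ b) * π a b := by
        simp only [add_mul, Finset.sum_add_distrib, Finset.mul_sum]
        rw [Finset.sum_comm (γ := β)]
    _ ≤ ∑ a, ∑ b, c a b * π a b := by
        gcongr with a _ b _
        · exact hπ a b
        · exact hc a b

theorem sum_mul_le_sum_mul_coupling [CommRing R] [LinearOrder R] [IsStrictOrderedRing R]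
    {f g : α → R} {π : α → α → R}
    (hfg : ∀ a b, f a * g a + f b * g b ≤ 2 * (f a * g b)) (hπ : ∀ a b, 0 ≤ π a b)
    (hfst : ∀ a, ∑ b, π a b = 1) (hsnd : ∀ b, ∑ a, π a b = 1) :
    ∑ a, f a * g a ≤ ∑ a, ∑ b, f a * g b * π a b := by
  have duality := sum_potential_mul_marginal_le hfg hπ
  simp only [hfst, hsnd, mul_one, mul_assoc (2 : R), ← Finset.mul_sum] at duality
  linarith

end Coupling

section Relaxation

variable {n : ℕ}

theorem ds_iff_mem_doublyStochastic {X : Matrix (Fin n) (Fin n) ℝ} :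
    DS X ↔ X ∈ doublyStochastic ℝ (Fin n) := by
  rw [mem_doublyStochastic_iff_sum, DS]
  tauto

theorem sdpFeasible_vecMulVec {X : Matrix (Fin n) (Fin n) ℝ} (hX : DS X)
    (hcol : ∀ k i j, i ≠ j → X i k * X j k = 0) (hrow : ∀ k i j, i ≠ j → X k i * X k j = 0) :
    SDPFeasible X (vecMulVec (vecM X) (vecM X)) := by
  obtain ⟨row_sum, col_sum, nonneg⟩ := hX
  refine ⟨?_, fun k l => ?_, fun k l => ?_, hcol, hrow,
    fun p q => mul_nonneg (nonneg _ _) (nonneg _ _), row_sum, col_sum, nonneg⟩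
  · rw [sub_self]
    exact PosSemidef.zero
  · simp only [vecMulVec_apply, vecM, ← Finset.sum_mul_sum, col_sum, mul_one]
  · simp only [vecMulVec_apply, vecM, ← Finset.sum_mul_sum, row_sum, mul_one]

theorem sdpFeasible_vecMulVec_permMatrix (σ : Equiv.Perm (Fin n)) :
    SDPFeasible (σ.permMatrix ℝ) (vecMulVec (vecM (σ.permMatrix ℝ)) (vecM (σ.permMatrix ℝ))) := by
  refine sdpFeasible_vecMulVec (ds_iff_mem_doublyStochastic.2 permMatrix_mem_doublyStochastic)
    (fun k i j hij => ?_) (fun k i j hij => ?_)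
  all_goals simp only [PEquiv.toMatrix_apply, Equiv.toPEquiv_apply, Option.mem_some_iff,
    ite_zero_mul_ite_zero]
  · exact if_neg fun ⟨hi, hj⟩ => hij (σ.injective (hi.trans hj.symm))
  · exact if_neg fun ⟨hi, hj⟩ => hij (hi.symm.trans hj)

theorem sdpObj_eq_sum_prodProdProdComm (A B : Matrix (Fin n) (Fin n) ℝ)
    (Y : Matrix (Fin n × Fin n) (Fin n × Fin n) ℝ) :
    sdpObj A B Y = ∑ r : Fin n × Fin n, ∑ s : Fin n × Fin n,
      A r.1 r.2 * B s.1 s.2 * Y (r.1, s.1) (r.2, s.2) := by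
  simp only [sdpObj, ← Fintype.sum_prod_type']
  exact Fintype.sum_equiv (Equiv.prodProdProdComm _ _ _ _) _ _ fun _ => rfl

theorem sum_mul_le_sdpObj {A B : Matrix (Fin n) (Fin n) ℝ}
    {Y : Matrix (Fin n × Fin n) (Fin n × Fin n) ℝ}
    (hAB : ∀ i j k l, A i j * B i j + A k l * B k l ≤ 2 * (A i j * B k l))
    (hsnd : ∀ k l, ∑ i, ∑ j, Y (i, k) (j, l) = 1) (hfst : ∀ i j, ∑ k, ∑ l, Y (i, k) (j, l) = 1)
    (hY : ∀ p q, 0 ≤ Y p q) :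
    ∑ i, ∑ j, A i j * B i j ≤ sdpObj A B Y := by
  rw [sdpObj_eq_sum_prodProdProdComm, ← Fintype.sum_prod_type']
  refine sum_mul_le_sum_mul_coupling (fun r s => hAB r.1 r.2 s.1 s.2)
    (fun r s => hY (r.1, s.1) (r.2, s.2)) (fun r => ?_) (fun s => ?_)
  · rw [Fintype.sum_prod_type, hfst]
  · rw [Fintype.sum_prod_type, hsnd]

end Relaxation

theorem stmt4_general {n : ℕ} (A B : Matrix (Fin n) (Fin n) ℝ)
    (h : ∀ i j k l,
      A i j * B i j + A k l * B k l ≤ 2 * min (A i j * B k l) (A k l * B i j)) :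
    SDPFeasible (1 : Matrix (Fin n) (Fin n) ℝ)
      (vecMulVec (vecM (1 : Matrix (Fin n) (Fin n) ℝ))
        (vecM (1 : Matrix (Fin n) (Fin n) ℝ))) ∧
    ∀ Y : Matrix (Fin n × Fin n) (Fin n × Fin n) ℝ,
      (∀ k l, ∑ i, ∑ j, Y (i, k) (j, l) = 1) → (∀ k l, ∑ i, ∑ j, Y (k, i) (l, j) = 1) →
      (∀ p q, 0 ≤ Y p q) → ∑ i, ∑ j, A i j * B i j ≤ sdpObj A B Y := by
  refine ⟨?_, fun Y hsnd hfst hY => sum_mul_le_sdpObj (fun i j k l => ?_) hsnd hfst hY⟩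
  · simpa only [permMatrix_one] using sdpFeasible_vecMulVec_permMatrix (1 : Equiv.Perm (Fin n))
  · exact (h i j k l).trans (by gcongr; exact min_le_left _ _)

/-- Theorem 5 (comonotonicity condition): under the strengthened rearrangement
condition, `(I, vec(I)vec(I)ᵀ)` is optimal for the SDP relaxation. -/
theorem stmt4 {n : ℕ} (A B : Matrix (Fin n) (Fin n) ℝ)
    (hA : A.IsSymm) (hB : B.IsSymm)
    (h : ∀ i j k l,
      A i j * B i j + A k l * B k l ≤ 2 * min (A i j * B k l) (A k l * B i j)) :
    SDPFeasible (1 : Matrix (Fin n) (Fin n) ℝ)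
      (vecMulVec (vecM (1 : Matrix (Fin n) (Fin n) ℝ))
        (vecM (1 : Matrix (Fin n) (Fin n) ℝ))) ∧
    (∀ (X : Matrix (Fin n) (Fin n) ℝ)
        (Y : Matrix (Fin n × Fin n) (Fin n × Fin n) ℝ),
      SDPFeasible X Y → sdpObj A B Y ≥ ∑ i, ∑ j, A i j * B i j) :=
  let ⟨hI, hopt⟩ := stmt4_general A B h
  ⟨hI, fun _ Y ⟨_, hsnd, hfst, _, _, hY, _⟩ => hopt Y hsnd hfst hY⟩
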